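/- Fix an integer n ≥ 1 and a real c > 0. Let L ⊆ ℝ be an open interval and f : L → (−∞, 0) a C² solution of the type III Grim Reaper ODE which is space-like at some s₀ ∈ L, i.e. f'(s₀)² < b_III(f(s₀))², and which is maximal in the sense that there is no solution of the type III Grim Reaper ODE defined on a strictly larger open interval whose restriction to L is f. Then L = ℝ, there exists s_m ∈ ℝ with f'(s_m) = 0 and f(s) > f(s_m) for all s ≠ s_m (a strict absolute minimum), and f(s) → 0 both as s → +∞ and as s → −∞. -/

import Mathlib

open Real Set Filter Topology

/-- The type III warping function `b_III(y) = -n·c·tanh(c·y)`. -/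
noncomputable def bIII (n : ℕ) (c : ℝ) : ℝ → ℝ := fun y => -((n : ℝ) * c * Real.tanh (c * y))

/-- `f` is a `C²` solution of the type III Grim Reaper ODE on `L`, with values in
`I_III = (-∞, 0)`. -/
def IsGrimReaperSolIII (n : ℕ) (c : ℝ) (f : ℝ → ℝ) (L : Set ℝ) : Prop :=
  (∀ s ∈ L, f s ∈ Set.Iio (0 : ℝ)) ∧
  ContDiffOn ℝ 2 f L ∧
  ∀ s ∈ L,
    deriv (deriv f) s =
      (1 - (deriv f s) ^ 2 / (bIII n c (f s)) ^ 2) * bIII n c (f s) * (c ^ 2 * (n : ℝ) ^ 2)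
        + (deriv (bIII n c) (f s) / bIII n c (f s)) * (deriv f s) ^ 2

/-!
Let `b` be a warping function and `G` a solution of `G' = (d / b) G`. Then `f` solves the Grim
Reaper ODE if and only if `u = G ∘ f` solves the linear equation `u'' = d² u`. For positive `b`,
`d` and `G`, being space-like at `s₀` means that `|u' s₀| < d * u s₀`, which forces
`u s = K cosh (d (s - m))` with `K > 0`. For type III one can take `G y = (sinh (-c y))⁻ⁿ`, an
increasing bijection from `(-∞, 0)` onto `(0, ∞)`. So every space-like solution extends to the
global solution `G⁻¹ (K cosh (d (s - m)))`, and the increasing map `G⁻¹` turns the strict minimum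
of `cosh` at `0` into one of `f` at `m`, and its divergence at `±∞` into `f → 0`.
-/

lemma exists_eq_mul_cosh_eq_mul_sinh {x y : ℝ} (h : |y| < x) :
    ∃ r > 0, ∃ t, x = r * cosh t ∧ y = r * sinh t := by
  have hx : 0 < x := (abs_nonneg y).trans_lt h
  have hratio : y / x ∈ Ioo (-1 : ℝ) 1 := by
    rwa [mem_Ioo, ← abs_lt, abs_div, abs_of_pos hx, div_lt_one hx]
  have hcosh := (cosh_pos (artanh (y / x))).ne'
  refine ⟨x / cosh (artanh (y / x)), div_pos hx (cosh_pos _), artanh (y / x), ?_, ?_⟩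
  · rw [div_mul_cancel₀ x hcosh]
  · rw [div_mul_eq_mul_div, mul_div_assoc, ← tanh_eq_sinh_div_cosh, tanh_artanh hratio,
      mul_div_cancel₀ y hx.ne']

lemma abs_le_cosh (x : ℝ) : |x| ≤ cosh x := by
  rw [← cosh_abs]
  exact (self_le_sinh_iff.2 (abs_nonneg x)).trans (sinh_lt_cosh _).le

lemma tendsto_cosh_of_tendsto_abs {α : Type*} {l : Filter α} {t : α → ℝ}
    (ht : Tendsto (fun a => |t a|) l atTop) : Tendsto (fun a => cosh (t a)) l atTop :=
  tendsto_atTop_mono (fun a => abs_le_cosh (t a)) ht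

lemma differentiable_tanh : Differentiable ℝ tanh := by
  rw [show tanh = fun x => sinh x / cosh x from funext tanh_eq_sinh_div_cosh]
  exact differentiable_sinh.div differentiable_cosh fun x => (cosh_pos x).ne'

lemma tanh_neg_of_neg {x : ℝ} (hx : x < 0) : tanh x < 0 := by
  rw [tanh_eq_sinh_div_cosh]
  exact div_neg_of_neg_of_pos (sinh_neg_iff.2 hx) (cosh_pos x)

section HyperbolicSystem

variable {d s₀ : ℝ} {u w : ℝ → ℝ} {L : Set ℝ}

lemma eq_cosh_add_sinh_of_hasDerivAt (hL : IsOpen L) (hLconn : IsPreconnected L)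
    (hu : ∀ s ∈ L, HasDerivAt u (d * w s) s) (hw : ∀ s ∈ L, HasDerivAt w (d * u s) s)
    (hs₀ : s₀ ∈ L) {s : ℝ} (hs : s ∈ L) :
    u s = u s₀ * cosh (d * (s - s₀)) + w s₀ * sinh (d * (s - s₀)) := by
  have hphase (s : ℝ) : HasDerivAt (fun s => d * (s - s₀)) d s := by
    simpa using ((hasDerivAt_id s).sub_const s₀).const_mul d
  have const_of_deriv {F : ℝ → ℝ} (hF : ∀ s ∈ L, HasDerivAt F 0 s) : F s = F s₀ :=
    hL.is_const_of_deriv_eq_zero hLconn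
      (fun t ht => (hF t ht).differentiableAt.differentiableWithinAt)
      (fun t ht => (hF t ht).deriv) hs hs₀
  have hcosh := const_of_deriv
    (F := fun s => u s * cosh (d * (s - s₀)) - w s * sinh (d * (s - s₀))) fun s hs =>
    (((hu s hs).mul (hphase s).cosh).sub ((hw s hs).mul (hphase s).sinh)).congr_deriv (by ring)
  have hsinh := const_of_deriv
    (F := fun s => w s * cosh (d * (s - s₀)) - u s * sinh (d * (s - s₀))) fun s hs =>
    (((hw s hs).mul (hphase s).cosh).sub ((hu s hs).mul (hphase s).sinh)).congr_deriv (by ring)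
  simp only [sub_self, mul_zero, cosh_zero, sinh_zero, mul_one, sub_zero] at hcosh hsinh
  rw [← hcosh, ← hsinh]
  linear_combination (-u s) * cosh_sq_sub_sinh_sq (d * (s - s₀))

lemma exists_eq_mul_cosh_of_hasDerivAt (hd : d ≠ 0) (hL : IsOpen L) (hLconn : IsPreconnected L)
    (hu : ∀ s ∈ L, HasDerivAt u (d * w s) s) (hw : ∀ s ∈ L, HasDerivAt w (d * u s) s)
    (hs₀ : s₀ ∈ L) (h : |w s₀| < u s₀) :
    ∃ K > 0, ∃ m, ∀ s ∈ L, u s = K * cosh (d * (s - m)) := by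
  obtain ⟨K, hK, t, hut, hwt⟩ := exists_eq_mul_cosh_eq_mul_sinh h
  refine ⟨K, hK, s₀ - t / d, fun s hs => ?_⟩
  have hphase : d * (s - (s₀ - t / d)) = t + d * (s - s₀) := by field_simp; ring
  rw [hphase, eq_cosh_add_sinh_of_hasDerivAt hL hLconn hu hw hs₀ hs, hut, hwt, cosh_add]
  ring

end HyperbolicSystem

section Linearization

/-- The right-hand side of the Grim Reaper ODE `f'' = grimReaperField b d f f'` for an arbitrary
warping function `b` and constant `d`. -/
noncomputable def grimReaperField (b : ℝ → ℝ) (d y p : ℝ) : ℝ :=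
  (1 - p ^ 2 / b y ^ 2) * b y * d + deriv b y / b y * p ^ 2

variable {b G f : ℝ → ℝ} {d s : ℝ}

lemma hasDerivAt_comp_of_linearizer (hG : HasDerivAt G (d / b (f s) * G (f s)) (f s))
    (hf : DifferentiableAt ℝ f s) :
    HasDerivAt (fun t => G (f t)) (d * (deriv f s / b (f s) * G (f s))) s :=
  (hG.comp s hf.hasDerivAt).congr_deriv (by ring)

lemma deriv_deriv_eq_grimReaperField_iff (hb : DifferentiableAt ℝ b (f s)) (hb₀ : b (f s) ≠ 0)
    (hG : HasDerivAt G (d / b (f s) * G (f s)) (f s)) (hG₀ : G (f s) ≠ 0)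
    (hf : DifferentiableAt ℝ f s) (hf' : DifferentiableAt ℝ (deriv f) s) :
    deriv (deriv f) s = grimReaperField b d (f s) (deriv f s) ↔
      HasDerivAt (fun t => deriv f t / b (f t) * G (f t)) (d * G (f s)) s := by
  have hderiv : HasDerivAt (fun t => deriv f t / b (f t) * G (f t))
      (d * G (f s) + (deriv (deriv f) s - grimReaperField b d (f s) (deriv f s))
        * (G (f s) / b (f s))) s := by
    refine ((hf'.hasDerivAt.div (hb.hasDerivAt.comp s hf.hasDerivAt) hb₀).mul
      (hG.comp s hf.hasDerivAt)).congr_deriv ?_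
    simp only [Function.comp_apply, Pi.div_apply, grimReaperField]
    field_simp
    ring
  constructor
  · intro hode
    simpa [hode] using hderiv
  · intro hlin
    have hzero := hderiv.unique hlin
    rw [add_eq_left, mul_eq_zero, sub_eq_zero] at hzero
    exact hzero.resolve_right (div_ne_zero hG₀ hb₀)

end Linearization

section TypeIII

variable {n : ℕ} {c : ℝ}

lemma differentiable_bIII : Differentiable ℝ (bIII n c) :=
  ((differentiable_tanh.comp (differentiable_id.const_mul c)).const_mul _).neg

lemma bIII_pos (hn : 1 ≤ n) (hc : 0 < c) {y : ℝ} (hy : y < 0) : 0 < bIII n c y :=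
  neg_pos.2 (mul_neg_of_pos_of_neg (by positivity)
    (tanh_neg_of_neg (mul_neg_of_pos_of_neg hc hy)))

lemma sinh_neg_mul_pos (hc : 0 < c) {y : ℝ} (hy : y < 0) : 0 < sinh (-(c * y)) :=
  sinh_pos_iff.2 (neg_pos.2 (mul_neg_of_pos_of_neg hc hy))

/-- The function `G` linearizing the type III Grim Reaper ODE: the solution
`G y = (sinh (-c y))⁻ⁿ` of `G' = (d_III / b_III) G` on `(-∞, 0)`. -/
noncomputable def linearizerIII (n : ℕ) (c y : ℝ) : ℝ := (sinh (-(c * y)) ^ n)⁻¹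

/-- The inverse `(0, ∞) → (-∞, 0)` of `linearizerIII n c`. -/
noncomputable def linearizerInvIII (n : ℕ) (c u : ℝ) : ℝ := -(arsinh (u⁻¹ ^ (n⁻¹ : ℝ)) / c)

lemma linearizerIII_pos (hc : 0 < c) {y : ℝ} (hy : y < 0) : 0 < linearizerIII n c y :=
  inv_pos.2 (pow_pos (sinh_neg_mul_pos hc hy) n)

lemma hasDerivAt_linearizerIII (hn : 1 ≤ n) (hc : 0 < c) {y : ℝ} (hy : y < 0) :
    HasDerivAt (linearizerIII n c) (c ^ 2 * n ^ 2 / bIII n c y * linearizerIII n c y) y := by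
  have hsinh := (sinh_neg_mul_pos hc hy).ne'
  have hcosh := (cosh_pos (c * y)).ne'
  have harg : HasDerivAt (fun y => -(c * y)) (-c) y := by
    simpa using (hasDerivAt_id y).const_mul (-c)
  refine ((harg.sinh.pow n).inv (pow_ne_zero n hsinh)).congr_deriv ?_
  obtain ⟨k, rfl⟩ := Nat.exists_eq_add_of_le' hn
  rw [bIII, linearizerIII, tanh_eq_sinh_div_cosh]
  simp only [sinh_neg, cosh_neg, Pi.pow_apply, Nat.add_sub_cancel] at hsinh ⊢
  have := neg_ne_zero.1 hsinh
  field_simp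
  ring

lemma linearizerInvIII_linearizerIII (hn : 1 ≤ n) (hc : 0 < c) {y : ℝ} (hy : y < 0) :
    linearizerInvIII n c (linearizerIII n c y) = y := by
  rw [linearizerInvIII, linearizerIII, inv_inv,
    pow_rpow_inv_natCast (sinh_neg_mul_pos hc hy).le (by lia), arsinh_sinh, neg_div, neg_neg,
    mul_div_cancel_left₀ y hc.ne']

lemma linearizerIII_linearizerInvIII (hn : 1 ≤ n) (hc : 0 < c) {u : ℝ} (hu : 0 < u) :
    linearizerIII n c (linearizerInvIII n c u) = u := by
  rw [linearizerIII, linearizerInvIII, mul_neg, neg_neg, mul_div_cancel₀ _ hc.ne', sinh_arsinh,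
    rpow_inv_natCast_pow (inv_pos.2 hu).le (by lia), inv_inv]

lemma linearizerInvIII_neg (hc : 0 < c) {u : ℝ} (hu : 0 < u) : linearizerInvIII n c u < 0 :=
  neg_neg_of_pos (div_pos (arsinh_pos_iff.2 (rpow_pos_of_pos (inv_pos.2 hu) _)) hc)

lemma strictMonoOn_linearizerInvIII (hn : 1 ≤ n) (hc : 0 < c) :
    StrictMonoOn (linearizerInvIII n c) (Ioi 0) := by
  intro u hu v _ huv
  have hroot : v⁻¹ ^ (n⁻¹ : ℝ) < u⁻¹ ^ (n⁻¹ : ℝ) :=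
    rpow_lt_rpow (inv_pos.2 (hu.trans huv)).le (inv_strictAnti₀ hu huv) (by positivity)
  exact neg_lt_neg (div_lt_div_of_pos_right (arsinh_lt_arsinh.2 hroot) hc)

lemma tendsto_linearizerInvIII_atTop (hn : 1 ≤ n) :
    Tendsto (linearizerInvIII n c) atTop (𝓝 0) := by
  have hroot : Tendsto (fun u : ℝ => u⁻¹ ^ (n⁻¹ : ℝ)) atTop (𝓝 0) := by
    simpa [zero_rpow (show (n⁻¹ : ℝ) ≠ 0 by positivity)] using
      tendsto_inv_atTop_zero.rpow_const (p := (n⁻¹ : ℝ)) (Or.inr (by positivity))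
  have hlim := (hroot.arsinh.div_const c).neg
  rwa [arsinh_zero, zero_div, neg_zero] at hlim

lemma isGrimReaperSolIII_iff (hn : 1 ≤ n) (hc : 0 < c) {f : ℝ → ℝ} {L : Set ℝ} (hL : IsOpen L) :
    IsGrimReaperSolIII n c f L ↔ (∀ s ∈ L, f s < 0) ∧ ContDiffOn ℝ 2 f L ∧
      ∀ s ∈ L, HasDerivAt (fun t => deriv f t / bIII n c (f t) * linearizerIII n c (f t))
        (c ^ 2 * n ^ 2 * linearizerIII n c (f s)) s := by
  refine and_congr_right fun hneg => and_congr_right fun hC => forall₂_congr fun s hs => ?_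
  exact deriv_deriv_eq_grimReaperField_iff (differentiable_bIII _)
    (bIII_pos hn hc (hneg s hs)).ne' (hasDerivAt_linearizerIII hn hc (hneg s hs))
    (linearizerIII_pos hc (hneg s hs)).ne'
    ((hC.differentiableOn (by norm_num)).differentiableAt (hL.mem_nhds hs))
    (((hC.deriv_of_isOpen (m := 1) hL (by norm_num)).differentiableOn
      (by norm_num)).differentiableAt (hL.mem_nhds hs))

/-- The space-like type III Grim Reapers: the preimage under `linearizerIII n c` of the solution
`K cosh (d_III (s - m))` of the linearized equation. -/
noncomputable def grimReaperIII (n : ℕ) (c K m s : ℝ) : ℝ :=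
  linearizerInvIII n c (K * cosh (c ^ 2 * n ^ 2 * (s - m)))

variable {K m : ℝ}

lemma contDiff_grimReaperIII (hK : 0 < K) : ContDiff ℝ 2 (grimReaperIII n c K m) := by
  have hpos (s : ℝ) : K * cosh (c ^ 2 * n ^ 2 * (s - m)) ≠ 0 := (mul_pos hK (cosh_pos _)).ne'
  have hcosh : ContDiff ℝ 2 fun s => K * cosh (c ^ 2 * n ^ 2 * (s - m)) :=
    contDiff_const.mul (ContDiff.cosh (by fun_prop))
  exact (((hcosh.inv hpos).rpow_const_of_ne fun s => inv_ne_zero (hpos s)).arsinh.div_const c).neg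

lemma isGrimReaperSolIII_grimReaperIII (hn : 1 ≤ n) (hc : 0 < c) (hK : 0 < K) :
    IsGrimReaperSolIII n c (grimReaperIII n c K m) univ := by
  set f := grimReaperIII n c K m
  have hpos (s : ℝ) : 0 < K * cosh (c ^ 2 * n ^ 2 * (s - m)) := mul_pos hK (cosh_pos _)
  have hneg (s : ℝ) : f s < 0 := linearizerInvIII_neg hc (hpos s)
  have hC : ContDiff ℝ 2 f := contDiff_grimReaperIII hK
  have hphase (s : ℝ) : HasDerivAt (fun s => c ^ 2 * n ^ 2 * (s - m)) (c ^ 2 * n ^ 2) s := by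
    simpa using ((hasDerivAt_id s).sub_const m).const_mul (c ^ 2 * (n : ℝ) ^ 2)
  have hcosh : (fun s => linearizerIII n c (f s)) = fun s => K * cosh (c ^ 2 * n ^ 2 * (s - m)) :=
    funext fun s => linearizerIII_linearizerInvIII hn hc (hpos s)
  have hsinh : (fun s => deriv f s / bIII n c (f s) * linearizerIII n c (f s)) =
      fun s => K * sinh (c ^ 2 * n ^ 2 * (s - m)) := by
    funext s
    have hlin := hasDerivAt_comp_of_linearizer (hasDerivAt_linearizerIII hn hc (hneg s))
      (hC.differentiable (by norm_num) s)
    rw [hcosh] at hlin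
    refine mul_left_cancel₀ (show c ^ 2 * (n : ℝ) ^ 2 ≠ 0 by positivity) ?_
    exact (hlin.unique ((hphase s).cosh.const_mul K)).trans (by ring)
  refine (isGrimReaperSolIII_iff hn hc isOpen_univ).2 ⟨fun s _ => hneg s, hC.contDiffOn, ?_⟩
  intro s _
  rw [hsinh, congrFun hcosh s]
  exact ((hphase s).sinh.const_mul K).congr_deriv (by ring)

lemma IsGrimReaperSolIII.exists_eqOn_grimReaperIII (hn : 1 ≤ n) (hc : 0 < c) {L : Set ℝ}
    (hL : IsOpen L) (hLconn : IsPreconnected L) {f : ℝ → ℝ} (hf : IsGrimReaperSolIII n c f L)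
    {s₀ : ℝ} (hs₀ : s₀ ∈ L) (hspace : deriv f s₀ ^ 2 < bIII n c (f s₀) ^ 2) :
    ∃ K > 0, ∃ m, EqOn (grimReaperIII n c K m) f L := by
  obtain ⟨hneg, hC, hw⟩ := (isGrimReaperSolIII_iff hn hc hL).1 hf
  have hu (s : ℝ) (hs : s ∈ L) := hasDerivAt_comp_of_linearizer
    (hasDerivAt_linearizerIII hn hc (hneg s hs))
    ((hC.differentiableOn (by norm_num)).differentiableAt (hL.mem_nhds hs))
  have hslope : |deriv f s₀ / bIII n c (f s₀) * linearizerIII n c (f s₀)| <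
      linearizerIII n c (f s₀) := by
    have hb := bIII_pos hn hc (hneg s₀ hs₀)
    have hG := linearizerIII_pos (n := n) hc (hneg s₀ hs₀)
    rw [abs_mul, abs_div, abs_of_pos hb, abs_of_pos hG]
    exact mul_lt_of_lt_one_left hG ((div_lt_one hb).2 (abs_lt_of_sq_lt_sq hspace hb.le))
  obtain ⟨K, hK, m, hcosh⟩ :=
    exists_eq_mul_cosh_of_hasDerivAt (by positivity) hL hLconn hu hw hs₀ hslope
  refine ⟨K, hK, m, fun s hs => ?_⟩
  rw [grimReaperIII, ← hcosh s hs, linearizerInvIII_linearizerIII hn hc (hneg s hs)]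

lemma grimReaperIII_lt_of_ne (hn : 1 ≤ n) (hc : 0 < c) (hK : 0 < K) {s : ℝ} (hs : s ≠ m) :
    grimReaperIII n c K m m < grimReaperIII n c K m s := by
  have hphase : c ^ 2 * (n : ℝ) ^ 2 * (s - m) ≠ 0 :=
    mul_ne_zero (by positivity) (sub_ne_zero.2 hs)
  refine strictMonoOn_linearizerInvIII hn hc (mul_pos hK (cosh_pos _)) (mul_pos hK (cosh_pos _)) ?_
  rw [sub_self, mul_zero, cosh_zero]
  exact mul_lt_mul_of_pos_left (one_lt_cosh.2 hphase) hK

lemma tendsto_grimReaperIII (hn : 1 ≤ n) (hc : 0 < c) (hK : 0 < K) {l : Filter ℝ}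
    (hl : Tendsto (fun s => |s - m|) l atTop) : Tendsto (grimReaperIII n c K m) l (𝓝 0) := by
  refine (tendsto_linearizerInvIII_atTop hn).comp
    ((tendsto_cosh_of_tendsto_abs ?_).const_mul_atTop hK)
  have hd : 0 < c ^ 2 * (n : ℝ) ^ 2 := by positivity
  simpa only [abs_mul, abs_of_pos hd] using hl.const_mul_atTop hd

end TypeIII

/-- A maximal space-like solution of the type III Grim Reaper ODE is of
Type III.B: globally defined, with a strict absolute minimum, and tending to `0` at both
`+∞` and `-∞`. -/
theorem grimReaperIII_spacelike_classification (n : ℕ) (hn : 1 ≤ n) (c : ℝ) (hc : 0 < c)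
    (L : Set ℝ) (hLopen : IsOpen L) (hLconn : L.OrdConnected)
    (f : ℝ → ℝ) (hf : IsGrimReaperSolIII n c f L)
    (s₀ : ℝ) (hs₀ : s₀ ∈ L)
    (hspace : (deriv f s₀) ^ 2 < (bIII n c (f s₀)) ^ 2)
    (hmax : ∀ (L' : Set ℝ) (g : ℝ → ℝ), IsOpen L' → L'.OrdConnected → L ⊆ L' →
      IsGrimReaperSolIII n c g L' → Set.EqOn g f L → L' = L) :
    L = Set.univ ∧
    (∃ sm : ℝ, deriv f sm = 0 ∧ ∀ s : ℝ, s ≠ sm → f sm < f s) ∧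
    Filter.Tendsto f Filter.atTop (𝓝 0) ∧
    Filter.Tendsto f Filter.atBot (𝓝 0) := by
  obtain ⟨K, hK, m, heq⟩ :=
    hf.exists_eqOn_grimReaperIII hn hc hLopen hLconn.isPreconnected hs₀ hspace
  obtain rfl : univ = L := hmax univ _ isOpen_univ ordConnected_univ (subset_univ L)
    (isGrimReaperSolIII_grimReaperIII hn hc hK) heq
  obtain rfl : grimReaperIII n c K m = f := funext fun s => heq (mem_univ s)
  have hmin (s : ℝ) (hs : s ≠ m) : grimReaperIII n c K m m < grimReaperIII n c K m s :=
    grimReaperIII_lt_of_ne hn hc hK hs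
  have hcrit : deriv (grimReaperIII n c K m) m = 0 :=
    IsLocalMin.deriv_eq_zero (Eventually.of_forall fun s => by
      rcases eq_or_ne s m with rfl | hs
      exacts [le_rfl, (hmin s hs).le])
  refine ⟨rfl, ⟨m, hcrit, hmin⟩, ?_, ?_⟩ <;> refine tendsto_grimReaperIII hn hc hK ?_
  · exact tendsto_abs_atTop_atTop.comp (tendsto_atTop_add_const_right atTop (-m) tendsto_id)
  · exact tendsto_abs_atBot_atTop.comp (tendsto_atBot_add_const_right atBot (-m) tendsto_id)
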